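/- Let α : ℕ → ℍ and let Γ_α act on sequences by (Γ_α v)(j) = Σ_k α(j+k) v(k). If there exists ψ ∈ L^∞ₛ(∂𝔹) with Fourier coefficients ψ̂(m) = \overline{α_m} for all m ≥ 0, then Γ_α is bounded on ℓ²(ℕ, ℍ) with ‖Γ_α‖ ≤ 2 ‖ψ‖_{L^∞(∂𝔹)}. -/

import Mathlib

noncomputable section

open MeasureTheory Quaternion

instance : MeasurableSpace (Quaternion ℝ) := borel _
instance : BorelSpace (Quaternion ℝ) := ⟨rfl⟩

/-- The sphere `𝕊` of imaginary units of `ℍ`. -/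
def IU : Type := {I : Quaternion ℝ // I ^ 2 = -1}

instance : MeasurableSpace IU := Subtype.instMeasurableSpace

/-- The point `e^{tI} = cos t + (sin t) I`. -/
def eI (I : Quaternion ℝ) (t : ℝ) : Quaternion ℝ :=
  ((Real.cos t : ℝ) : Quaternion ℝ) + Real.sin t • I

/-- The normalized measure `dΣ(e^{tI}) = dσ(I) dt` on `∂𝔹`, obtained by pushing forward
`σ ⊗ (dt on (0, 2π])` under `(I, t) ↦ e^{tI}` and normalizing by `2π`. -/
def sphereMeasure (σ : Measure IU) : Measure (Quaternion ℝ) :=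
  (ENNReal.ofReal (2 * Real.pi))⁻¹ •
    Measure.map (fun p : IU × ℝ => eI p.1.1 p.2)
      (σ.prod (volume.restrict (Set.Ioc 0 (2 * Real.pi))))

/-- A slice function on `∂𝔹`: it satisfies the representation formula. -/
def IsSlice (f : Quaternion ℝ → Quaternion ℝ) : Prop :=
  ∀ x y : ℝ, ∀ I J : Quaternion ℝ, I ^ 2 = -1 → J ^ 2 = -1 → x ^ 2 + y ^ 2 = 1 →
    f ((x : Quaternion ℝ) + y • J) =
      ((1 - J * I) / 2) * f ((x : Quaternion ℝ) + y • I) +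
      ((1 + J * I) / 2) * f ((x : Quaternion ℝ) - y • I)

/-- The `n`-th Fourier coefficient of (the restriction to the slice of `I` of) a function
on `∂𝔹`: `φ̂(n) = (1/2π) ∫₀^{2π} e^{-nIt} φ(e^{It}) dt`. -/
def fourierCoef (φ : Quaternion ℝ → Quaternion ℝ) (I : Quaternion ℝ) (n : ℤ) : Quaternion ℝ :=
  (2 * Real.pi)⁻¹ • ∫ t in (0:ℝ)..(2 * Real.pi), eI I (-(n * t)) * φ (eI I t)


open scoped RealInnerProductSpace

lemma nh_star {I : Quaternion ℝ} (hI : I ^ 2 = -1) : star I = -I := by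
  have h1 : I * I = -1 := by rw [← sq]; exact hI
  have hn : ‖I‖ = 1 := by
    have : ‖I‖ ^ 2 = 1 := by rw [← norm_pow, hI]; simp
    nlinarith [norm_nonneg I]
  have h2 : star I * I = 1 := by
    rw [Quaternion.star_mul_self, Quaternion.normSq_eq_norm_mul_self, hn]; simp
  calc star I = -(star I * (I * I)) := by rw [h1]; simp
    _ = -I := by rw [← mul_assoc, h2, one_mul]

lemma nh_norm {I : Quaternion ℝ} (hI : I ^ 2 = -1) : ‖I‖ = 1 := by
  have : ‖I‖ ^ 2 = 1 := by rw [← norm_pow, hI]; simp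
  nlinarith [norm_nonneg I]

lemma nh_coe (x : ℝ) : ((x : ℝ) : Quaternion ℝ) = x • (1 : Quaternion ℝ) := by
  rw [← Algebra.algebraMap_eq_smul_one]; rfl

lemma nh_eI_star {I : Quaternion ℝ} (hI : I ^ 2 = -1) (t : ℝ) : star (eI I t) = eI I (-t) := by
  simp [eI, nh_star hI]

lemma nh_eI_neg (I : Quaternion ℝ) (t : ℝ) : eI (-I) t = eI I (-t) := by
  simp [eI]

lemma nh_eI_mul {I : Quaternion ℝ} (hI : I ^ 2 = -1) (s t : ℝ) :
    eI I s * eI I t = eI I (s + t) := by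
  have h1 : I * I = -1 := by rw [← sq]; exact hI
  simp only [eI, nh_coe, Real.cos_add, Real.sin_add, mul_add, add_mul, smul_mul_assoc,
    mul_smul_comm, one_mul, mul_one, h1]
  module

lemma nh_eI_cont (I : Quaternion ℝ) : Continuous (eI I) := by
  have : eI I = fun t => Real.cos t • (1 : Quaternion ℝ) + Real.sin t • I := by
    funext t; simp [eI, nh_coe]
  rw [this]; fun_prop

/-- adjointness of left multiplication -/
lemma nh_inner_mul (a x y : Quaternion ℝ) : ⟪a * x, y⟫ = ⟪x, star a * y⟫ := by
  simp only [Quaternion.inner_def, star_mul, star_star]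
  simp only [Quaternion.re_mul, Quaternion.re_star, Quaternion.imI_star, Quaternion.imJ_star,
    Quaternion.imK_star, Quaternion.imI_mul, Quaternion.imJ_mul, Quaternion.imK_mul]
  ring

lemma nh_int_cos (n : ℤ) (hn : n ≠ 0) : ∫ t in (0:ℝ)..(2 * Real.pi), Real.cos (n * t) = 0 := by
  have : (n : ℝ) ≠ 0 := by exact_mod_cast hn
  rw [intervalIntegral.integral_comp_mul_left (fun x => Real.cos x) this, integral_cos]
  have h := Real.sin_int_mul_pi (2 * n)
  push_cast at h
  rw [show (n : ℝ) * (2 * Real.pi) = 2 * n * Real.pi by ring, h]; simp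

lemma nh_int_sin (n : ℤ) : ∫ t in (0:ℝ)..(2 * Real.pi), Real.sin (n * t) = 0 := by
  by_cases hn : n = 0
  · simp [hn]
  have : (n : ℝ) ≠ 0 := by exact_mod_cast hn
  rw [intervalIntegral.integral_comp_mul_left (fun x => Real.sin x) this, integral_sin]
  rw [Real.cos_int_mul_two_pi n]; simp

/-- Plancherel for trigonometric polynomials. -/
lemma nh_planch {I : Quaternion ℝ} (hI : I ^ 2 = -1) (K : ℕ) (v : ℕ → Quaternion ℝ) :
    ∫ t in (0:ℝ)..(2 * Real.pi), ‖∑ k ∈ Finset.range K, eI I (k * t) * v k‖ ^ 2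
      = 2 * Real.pi * ∑ k ∈ Finset.range K, ‖v k‖ ^ 2 := by
  have h1 : ∀ t : ℝ, ‖∑ k ∈ Finset.range K, eI I (k * t) * v k‖ ^ 2
      = ∑ k ∈ Finset.range K, ∑ l ∈ Finset.range K,
        (Real.cos (((k : ℤ) - l : ℤ) * t) * ⟪v k, v l⟫
          + Real.sin (((k : ℤ) - l : ℤ) * t) * ⟪I * v k, v l⟫) := by
    intro t
    rw [← real_inner_self_eq_norm_sq, sum_inner]
    refine Finset.sum_congr rfl fun k _ => ?_
    rw [inner_sum]
    refine Finset.sum_congr rfl fun l _ => ?_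
    have : ⟪eI I (k * t) * v k, eI I (l * t) * v l⟫
        = ⟪eI I (((k : ℤ) - l : ℤ) * t) * v k, v l⟫ := by
      rw [real_inner_comm, nh_inner_mul, nh_eI_star hI, ← mul_assoc, nh_eI_mul hI, real_inner_comm]
      congr 3
      push_cast; ring
    rw [this, eI, nh_coe, add_mul, inner_add_left, smul_mul_assoc, smul_mul_assoc, one_mul,
      real_inner_smul_left, real_inner_smul_left]
  simp_rw [h1]
  rw [intervalIntegral.integral_finsetSum
    (fun k _ => Continuous.intervalIntegrable (by fun_prop) _ _), Finset.mul_sum]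
  refine Finset.sum_congr rfl fun k hk => ?_
  rw [intervalIntegral.integral_finsetSum
    (fun k _ => Continuous.intervalIntegrable (by fun_prop) _ _)]
  rw [Finset.sum_eq_single k]
  · simp
  · intro l _ hlk
    rw [intervalIntegral.integral_add (Continuous.intervalIntegrable (by fun_prop) _ _)
      (Continuous.intervalIntegrable (by fun_prop) _ _), intervalIntegral.integral_mul_const,
      intervalIntegral.integral_mul_const, nh_int_sin, nh_int_cos]
    · simp
    · intro h; apply hlk; omega
  · intro h; exact absurd hk h

lemma nh_split {I : Quaternion ℝ} (hI : I ^ 2 = -1) (φ : Quaternion ℝ) (t : ℝ) :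
    φ * eI I t = eI I t * ((2:ℝ)⁻¹ • (φ - I * φ * I))
      + eI I (-t) * ((2:ℝ)⁻¹ • (φ + I * φ * I)) := by
  have h1 : I * I = -1 := by rw [← sq]; exact hI
  have h2 : I * (I * φ * I) = - (φ * I) := by
    rw [← mul_assoc, ← mul_assoc, h1]; simp
  simp only [eI, nh_coe, Real.cos_neg, Real.sin_neg, mul_add, add_mul, mul_sub, smul_mul_assoc,
    mul_smul_comm, one_mul, mul_one, h2]
  module

lemma nh_amgm (M s p a b : ℝ) (hs : 0 < s) (hp : p ≤ M) (ha : 0 ≤ a)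
    (hb : 0 ≤ b) (hM : 0 ≤ M) : p * a * b ≤ M * ((s * a ^ 2 + b ^ 2 / s) / 2) := by
  have h1 : p * a * b ≤ M * (a * b) := by
    rw [mul_assoc]; exact mul_le_mul_of_nonneg_right hp (mul_nonneg ha hb)
  refine h1.trans (mul_le_mul_of_nonneg_left ?_ hM)
  have : s * a ^ 2 + b ^ 2 / s - 2 * (a * b) = (s * a - b) ^ 2 / s := by field_simp; ring
  have h2 : 0 ≤ (s * a - b) ^ 2 / s := by positivity
  linarith

lemma nh_point {I : Quaternion ℝ} (hI : I ^ 2 = -1) (φ : Quaternion ℝ) (t M s : ℝ) (hs : 0 < s)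
    (hM : 0 ≤ M) (hφ : ‖φ‖ ≤ M) (A : Quaternion ℝ) (N : ℕ) (w : ℕ → Quaternion ℝ) :
    ∑ j ∈ Finset.range N, ⟪φ * eI I (j * t) * A, w j⟫ ≤
      M * (s * ‖A‖ ^ 2 + (‖∑ j ∈ Finset.range N, eI I (j * t) * w j‖ ^ 2
        + ‖∑ j ∈ Finset.range N, eI (-I) (j * t) * w j‖ ^ 2) / (2 * s)) := by
  set P := ((2:ℝ)⁻¹ • (φ - I * φ * I)) with hP
  set Q := ((2:ℝ)⁻¹ • (φ + I * φ * I)) with hQ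
  have hIn := nh_norm hI
  have hx : ‖I * φ * I‖ = ‖φ‖ := by simp [hIn]
  have hPn : ‖P‖ ≤ M := by
    rw [hP, norm_smul]
    have := norm_sub_le φ (I * φ * I)
    norm_num
    linarith
  have hQn : ‖Q‖ ≤ M := by
    rw [hQ, norm_smul]
    have := norm_add_le φ (I * φ * I)
    norm_num
    linarith
  have key : ∑ j ∈ Finset.range N, ⟪φ * eI I (j * t) * A, w j⟫
      = ⟪P * A, ∑ j ∈ Finset.range N, eI (-I) (j * t) * w j⟫
        + ⟪Q * A, ∑ j ∈ Finset.range N, eI I (j * t) * w j⟫ := by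
    rw [inner_sum, inner_sum, ← Finset.sum_add_distrib]
    refine Finset.sum_congr rfl fun j _ => ?_
    rw [nh_split hI, ← hP, ← hQ, add_mul, inner_add_left, mul_assoc, mul_assoc,
      nh_inner_mul (eI I (j * t)), nh_inner_mul (eI I (-(j * t))),
      nh_eI_star hI, nh_eI_star hI, neg_neg, nh_eI_neg]
  rw [key]
  have e1 := real_inner_le_norm (P * A) (∑ j ∈ Finset.range N, eI (-I) (j * t) * w j)
  have e2 := real_inner_le_norm (Q * A) (∑ j ∈ Finset.range N, eI I (j * t) * w j)
  rw [norm_mul] at e1 e2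
  have f1 := nh_amgm M s ‖P‖ ‖A‖ _ hs hPn (norm_nonneg _)
    (norm_nonneg (∑ j ∈ Finset.range N, eI (-I) (j * t) * w j)) hM
  have f2 := nh_amgm M s ‖Q‖ ‖A‖ _ hs hQn (norm_nonneg _)
    (norm_nonneg (∑ j ∈ Finset.range N, eI I (j * t) * w j)) hM
  refine (add_le_add (e1.trans f1) (e2.trans f2)).trans (le_of_eq ?_)
  generalize ‖∑ j ∈ Finset.range N, eI (-I) (j * t) * w j‖ = x
  generalize ‖∑ j ∈ Finset.range N, eI I (j * t) * w j‖ = y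
  field_simp
  ring

lemma nh_core {I : Quaternion ℝ} (hI : I ^ 2 = -1) (φ : ℝ → Quaternion ℝ) (M : ℝ) (hM : 0 ≤ M)
    (hφm : AEStronglyMeasurable φ (volume.restrict (Set.Ioc 0 (2 * Real.pi))))
    (hφ : ∀ᵐ t ∂(volume.restrict (Set.Ioc 0 (2 * Real.pi))), ‖φ t‖ ≤ M)
    (α : ℕ → Quaternion ℝ)
    (hα : ∀ m : ℕ, α m = (2 * Real.pi)⁻¹ • ∫ t in (0:ℝ)..(2 * Real.pi), φ t * eI I (m * t))
    (K N : ℕ) (v w : ℕ → Quaternion ℝ) (s : ℝ) (hs : 0 < s) :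
    ∑ j ∈ Finset.range N, ⟪∑ k ∈ Finset.range K, α (j + k) * v k, w j⟫
      ≤ M * (s * ∑ k ∈ Finset.range K, ‖v k‖ ^ 2 + (∑ j ∈ Finset.range N, ‖w j‖ ^ 2) / s) := by
  have hpi : 0 < 2 * Real.pi := by positivity
  have hint : IntervalIntegrable φ volume 0 (2 * Real.pi) := by
    rw [intervalIntegrable_iff_integrableOn_Ioc_of_le hpi.le]
    exact Integrable.of_bound hφm M hφ
  have hint2 : ∀ m : ℕ, IntervalIntegrable (fun t => φ t * eI I (m * t)) volume 0 (2 * Real.pi) :=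
    fun m => hint.mul_continuousOn
      ((nh_eI_cont I).comp (by fun_prop : Continuous fun t : ℝ => (m : ℝ) * t)).continuousOn
  let L : Quaternion ℝ → Quaternion ℝ → (Quaternion ℝ →L[ℝ] ℝ) := fun a b =>
    (innerSL ℝ b).comp ((ContinuousLinearMap.mul ℝ (Quaternion ℝ)).flip a)
  have hL : ∀ a b x, L a b x = ⟪x * a, b⟫ := by
    intro a b x; simp [L, real_inner_comm]
  have hterm : ∀ j k : ℕ, IntervalIntegrable (fun t => ⟪φ t * eI I ((j + k : ℕ) * t) * v k, w j⟫)
      volume 0 (2 * Real.pi) := by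
    intro j k
    have h0 := hint2 (j + k)
    rw [intervalIntegrable_iff_integrableOn_Ioc_of_le hpi.le] at h0 ⊢
    have := (L (v k) (w j)).integrable_comp h0
    simp only [hL] at this
    exact this
  have hterm2 : ∀ j k : ℕ, ⟪α (j + k) * v k, w j⟫ = (2 * Real.pi)⁻¹ *
      ∫ t in (0:ℝ)..(2 * Real.pi), ⟪φ t * eI I ((j + k : ℕ) * t) * v k, w j⟫ := by
    intro j k
    have := (L (v k) (w j)).intervalIntegral_comp_comm (hint2 (j + k))
    simp only [hL] at this
    rw [this, hα, smul_mul_assoc, real_inner_smul_left]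
  have hsum : ∑ j ∈ Finset.range N, ⟪∑ k ∈ Finset.range K, α (j + k) * v k, w j⟫
      = (2 * Real.pi)⁻¹ * ∫ t in (0:ℝ)..(2 * Real.pi),
        ∑ j ∈ Finset.range N, ∑ k ∈ Finset.range K,
          ⟪φ t * eI I ((j + k : ℕ) * t) * v k, w j⟫ := by
    rw [intervalIntegral.integral_finsetSum, Finset.mul_sum]
    · refine Finset.sum_congr rfl fun j _ => ?_
      rw [intervalIntegral.integral_finsetSum (fun k _ => hterm j k), Finset.mul_sum, sum_inner]
      exact Finset.sum_congr rfl fun k _ => hterm2 j k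
    · intro j _
      have := IntervalIntegrable.sum (Finset.range K) (fun k _ => hterm j k)
      simpa only [Finset.sum_fn] using this
  have hc : ∀ (I' : Quaternion ℝ) (n : ℕ) (u : ℕ → Quaternion ℝ),
      Continuous fun t : ℝ => ‖∑ k ∈ Finset.range n, eI I' (k * t) * u k‖ ^ 2 := by
    intro I' n u
    refine (continuous_norm.comp (continuous_finsetSum _ fun k _ => ?_)).pow 2
    exact ((nh_eI_cont I').comp (by fun_prop : Continuous fun t : ℝ => (k : ℝ) * t)).mul
      continuous_const
  have hIneg : (-I) ^ 2 = -1 := by rw [neg_sq, hI]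
  have hle : ∫ t in (0:ℝ)..(2 * Real.pi),
        ∑ j ∈ Finset.range N, ∑ k ∈ Finset.range K,
          ⟪φ t * eI I ((j + k : ℕ) * t) * v k, w j⟫
      ≤ ∫ t in (0:ℝ)..(2 * Real.pi),
        M * (s * ‖∑ k ∈ Finset.range K, eI I (k * t) * v k‖ ^ 2
        + (‖∑ j ∈ Finset.range N, eI I (j * t) * w j‖ ^ 2
        + ‖∑ j ∈ Finset.range N, eI (-I) (j * t) * w j‖ ^ 2) / (2 * s)) := by
    rw [intervalIntegral.integral_of_le hpi.le, intervalIntegral.integral_of_le hpi.le]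
    refine integral_mono_ae ?_ ?_ ?_
    · refine integrable_finsetSum _ fun j _ => integrable_finsetSum _ fun k _ => ?_
      exact (intervalIntegrable_iff_integrableOn_Ioc_of_le hpi.le).1 (hterm j k)
    · refine (intervalIntegrable_iff_integrableOn_Ioc_of_le hpi.le).1
        (Continuous.intervalIntegrable ?_ _ _)
      exact continuous_const.mul ((continuous_const.mul (hc _ _ _)).add
        (((hc _ _ _).add (hc _ _ _)).div_const _))
    · filter_upwards [hφ] with t ht
      refine le_trans (le_of_eq ?_) (nh_point hI (φ t) t M s hs hM ht _ N w)
      refine Finset.sum_congr rfl fun j _ => ?_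
      rw [Finset.mul_sum, sum_inner]
      refine Finset.sum_congr rfl fun k _ => ?_
      rw [← mul_assoc, mul_assoc (φ t) (eI I (j * t)), nh_eI_mul hI, ← add_mul]
      push_cast; rfl
  rw [hsum]
  refine (mul_le_mul_of_nonneg_left hle (by positivity)).trans (le_of_eq ?_)
  rw [intervalIntegral.integral_const_mul, intervalIntegral.integral_add,
    intervalIntegral.integral_const_mul, intervalIntegral.integral_div,
    intervalIntegral.integral_add, nh_planch hI, nh_planch hI, nh_planch hIneg]
  · field_simp
    ring
  · exact (hc _ _ _).intervalIntegrable _ _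
  · exact (hc _ _ _).intervalIntegrable _ _
  · exact (continuous_const.mul (hc _ _ _)).intervalIntegrable _ _
  · exact (((hc _ _ _).add (hc _ _ _)).div_const _).intervalIntegrable _ _

lemma nh_fin (M : ℝ) (hM : 0 ≤ M) (α : ℕ → Quaternion ℝ)
    (h : ∀ (K N : ℕ) (v w : ℕ → Quaternion ℝ) (s : ℝ), 0 < s →
    ∑ j ∈ Finset.range N, ⟪∑ k ∈ Finset.range K, α (j + k) * v k, w j⟫
      ≤ M * (s * ∑ k ∈ Finset.range K, ‖v k‖ ^ 2 + (∑ j ∈ Finset.range N, ‖w j‖ ^ 2) / s))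
    (K N : ℕ) (v : ℕ → Quaternion ℝ) :
    ∑ j ∈ Finset.range N, ‖∑ k ∈ Finset.range K, α (j + k) * v k‖ ^ 2
      ≤ (2 * M) ^ 2 * ∑ k ∈ Finset.range K, ‖v k‖ ^ 2 := by
  have h1 := h K N v (fun j => ∑ k ∈ Finset.range K, α (j + k) * v k)
  simp only [real_inner_self_eq_norm_sq] at h1
  rcases hM.eq_or_lt with h0 | h0
  · have := h1 1 one_pos
    rw [← h0] at this ⊢
    simpa using this
  · have := h1 (2 * M) (by positivity)
    generalize (∑ j ∈ Finset.range N, ‖∑ k ∈ Finset.range K, α (j + k) * v k‖ ^ 2) = W at *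
    have e : M * (2 * M * ∑ k ∈ Finset.range K, ‖v k‖ ^ 2 + W / (2 * M))
      = 2 * M ^ 2 * (∑ k ∈ Finset.range K, ‖v k‖ ^ 2) + W / 2 := by field_simp
    rw [e] at this
    linarith

lemma nh_final (M : ℝ) (hM : 0 ≤ M) (α : ℕ → Quaternion ℝ)
    (h : ∀ (K N : ℕ) (v : ℕ → Quaternion ℝ),
      ∑ j ∈ Finset.range N, ‖∑ k ∈ Finset.range K, α (j + k) * v k‖ ^ 2
      ≤ (2 * M) ^ 2 * ∑ k ∈ Finset.range K, ‖v k‖ ^ 2)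
    (v : lp (fun _ : ℕ => Quaternion ℝ) 2) :
      ∃ w : lp (fun _ : ℕ => Quaternion ℝ) 2,
        (∀ j : ℕ, HasSum (fun k : ℕ => α (j + k) * v k) (w j)) ∧
        ‖w‖ ≤ 2 * M * ‖v‖ := by
  have hαs : Summable fun m => ‖α m‖ ^ 2 := by
    refine summable_of_sum_range_le (c := (2 * M) ^ 2) (fun _ => by positivity) fun N => ?_
    simpa using h 1 N (fun _ => 1)
  have h2 : (0:ℝ) < (2 : ENNReal).toReal := by norm_num
  have hvs : HasSum (fun k => ‖v k‖ ^ 2) (‖v‖ ^ 2) := by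
    simpa using lp.hasSum_norm h2 v
  have hsum : ∀ j, Summable fun k => α (j + k) * v k := by
    intro j
    have ha : Summable fun k => ‖α (j + k)‖ ^ 2 :=
      hαs.comp_injective (add_right_injective j)
    refine Summable.of_norm_bounded (ha.add hvs.summable) fun k => ?_
    rw [norm_mul]
    nlinarith [sq_nonneg (‖α (j + k)‖ - ‖v k‖), sq_nonneg ‖α (j + k)‖, sq_nonneg ‖v k‖]
  have hN : ∀ N, ∑ j ∈ Finset.range N, ‖∑' k, α (j + k) * v k‖ ^ 2 ≤ (2 * M) ^ 2 * ‖v‖ ^ 2 := by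
    intro N
    have hlim : Filter.Tendsto (fun K => ∑ j ∈ Finset.range N,
        ‖∑ k ∈ Finset.range K, α (j + k) * v k‖ ^ 2) Filter.atTop
        (nhds (∑ j ∈ Finset.range N, ‖∑' k, α (j + k) * v k‖ ^ 2)) :=
      tendsto_finsetSum _ fun j _ => ((hsum j).hasSum.tendsto_sum_nat.norm).pow 2
    refine le_of_tendsto hlim (Filter.Eventually.of_forall fun K => (h K N v).trans ?_)
    exact mul_le_mul_of_nonneg_left (sum_le_hasSum _ (fun _ _ => by positivity) hvs)
      (by positivity)
  have hws : Summable fun j => ‖∑' k, α (j + k) * v k‖ ^ 2 :=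
    summable_of_sum_range_le (fun _ => by positivity) hN
  have hmem : Memℓp (fun j => ∑' k, α (j + k) * v k) 2 := by
    rw [memℓp_gen_iff h2]
    simpa using hws
  refine ⟨⟨_, hmem⟩, fun j => (hsum j).hasSum, ?_⟩
  set w : lp (fun _ : ℕ => Quaternion ℝ) 2 := ⟨_, hmem⟩ with hw
  have hwn : HasSum (fun k => ‖w k‖ ^ 2) (‖w‖ ^ 2) := by
    simpa using lp.hasSum_norm h2 w
  have : ‖w‖ ^ 2 ≤ (2 * M * ‖v‖) ^ 2 := by
    rw [mul_pow]
    exact le_of_tendsto hwn.tendsto_sum_nat (Filter.Eventually.of_forall hN)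
  exact le_of_sq_le_sq this (by positivity)

lemma nh_slice (σ : Measure IU) [IsProbabilityMeasure σ] (ψ : Quaternion ℝ → Quaternion ℝ)
    (hψm : AEStronglyMeasurable ψ (sphereMeasure σ))
    (hψtop : eLpNorm ψ ⊤ (sphereMeasure σ) ≠ ⊤) :
    ∃ I : Quaternion ℝ, I ^ 2 = -1 ∧
      AEStronglyMeasurable (fun t => ψ (eI I t)) (volume.restrict (Set.Ioc 0 (2 * Real.pi))) ∧
      ∀ᵐ t ∂(volume.restrict (Set.Ioc 0 (2 * Real.pi))),
        ‖ψ (eI I t)‖ ≤ (eLpNorm ψ ⊤ (sphereMeasure σ)).toReal := by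
  have hmeas : Measurable (fun p : IU × ℝ => eI p.1.1 p.2) := by
    have hc : Continuous (fun p : Quaternion ℝ × ℝ => eI p.1 p.2) := by
      simp only [eI, nh_coe]; fun_prop
    have hm0 : Measurable (fun p : Quaternion ℝ × ℝ => eI p.1 p.2) := hc.measurable
    have hv : Measurable (fun I : IU => I.1) := measurable_subtype_coe
    have hp : Measurable (fun p : IU × ℝ => ((p.1.1, p.2) : Quaternion ℝ × ℝ)) :=
      Measurable.prodMk (hv.comp measurable_fst) measurable_snd
    have h := Measurable.comp hm0 hp
    have he : ((fun p : Quaternion ℝ × ℝ => eI p.1 p.2) ∘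
      (fun p : IU × ℝ => ((p.1.1, p.2) : Quaternion ℝ × ℝ))) =
        (fun p : IU × ℝ => eI p.1.1 p.2) := by funext p; rfl
    rw [← he]
    exact h
  have hac : Measure.map (fun p : IU × ℝ => eI p.1.1 p.2)
      (σ.prod (volume.restrict (Set.Ioc 0 (2 * Real.pi)))) ≪ sphereMeasure σ := by
    refine Measure.absolutelyContinuous_smul ?_
    exact ENNReal.inv_ne_zero.2 ENNReal.ofReal_ne_top
  have hb : ∀ᵐ q ∂(sphereMeasure σ), ‖ψ q‖ ≤ (eLpNorm ψ ⊤ (sphereMeasure σ)).toReal := by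
    filter_upwards [enorm_ae_le_eLpNormEssSup ψ (sphereMeasure σ)] with q hq
    rw [← eLpNorm_exponent_top] at hq
    rw [← toReal_enorm]
    exact ENNReal.toReal_mono hψtop hq
  have hb2 := Measure.ae_ae_of_ae_prod (ae_of_ae_map hmeas.aemeasurable (hac.ae_le hb))
  have hm2 := ((hψm.mono_ac hac).comp_measurable hmeas).prodMk_left
  obtain ⟨I, h1, h2⟩ := (hb2.and hm2).exists
  exact ⟨I.1, I.2, h2, h1⟩

/-- Sufficiency in the quaternionic Nehari theorem, with the explicit bound: if there is a
slice `L^∞` function `ψ` on `∂𝔹` with Fourier coefficients `ψ̂(m) = star (α m)` for all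
`m ≥ 0`, then the Hankel operator `Γ_α`, `(Γ_α v)(j) = Σ_k α(j+k) v(k)`, is (well defined
and) bounded on `ℓ²(ℕ, ℍ)` with `‖Γ_α‖ ≤ 2 ‖ψ‖_{L^∞(∂𝔹)}`. -/
theorem nehari_sufficiency (σ : Measure IU) [IsProbabilityMeasure σ]
    (α : ℕ → Quaternion ℝ)
    (ψ : Quaternion ℝ → Quaternion ℝ) (hψ : IsSlice ψ)
    (hψm : AEStronglyMeasurable ψ (sphereMeasure σ))
    (hψtop : eLpNorm ψ ⊤ (sphereMeasure σ) ≠ ⊤)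
    (hcoef : ∀ m : ℕ, ∀ I : Quaternion ℝ, I ^ 2 = -1 →
      fourierCoef ψ I (m : ℤ) = star (α m)) :
    ∀ v : lp (fun _ : ℕ => Quaternion ℝ) 2,
      ∃ w : lp (fun _ : ℕ => Quaternion ℝ) 2,
        (∀ j : ℕ, HasSum (fun k : ℕ => α (j + k) * v k) (w j)) ∧
        ‖w‖ ≤ 2 * (eLpNorm ψ ⊤ (sphereMeasure σ)).toReal * ‖v‖ := by
  obtain ⟨I, hI, hm, hb⟩ := nh_slice σ ψ hψm hψtop
  refine nh_final _ ENNReal.toReal_nonneg α (nh_fin _ ENNReal.toReal_nonneg α ?_)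
  refine nh_core hI (fun t => star (ψ (eI I t))) _ ENNReal.toReal_nonneg
    (continuous_star.comp_aestronglyMeasurable hm) (by simpa using hb) α fun m => ?_
  have h := congrArg star (hcoef m I hI)
  rw [star_star] at h
  rw [← h, fourierCoef, Quaternion.star_smul]
  congr 1
  have : StarModule ℝ (Quaternion ℝ) :=
    ⟨fun r a => by rw [Quaternion.star_smul, star_trivial r]⟩
  have hpi : (0:ℝ) ≤ 2 * Real.pi := by positivity
  have h3 := ((starL' ℝ : Quaternion ℝ ≃L[ℝ] Quaternion ℝ)).integral_comp_comm
    (μ := volume.restrict (Set.Ioc 0 (2 * Real.pi)))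
    (fun t => eI I (-((m : ℤ) * t)) * ψ (eI I t))
  simp only [starL'_apply, star_mul, nh_eI_star hI, neg_neg] at h3
  rw [intervalIntegral.integral_of_le hpi, intervalIntegral.integral_of_le hpi]
  simpa using h3.symm
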